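/- With W, δ, e, N, M and W_δ as in the context, dim_H(W_δ) = δ. -/

import Mathlib

open Metric Set Filter MeasureTheory

noncomputable local instance : MetricSpace (ℕ → Bool) := PiNat.metricSpace

/-! A product `∏ F k` of finite alphabets has `∏ k < n, #(F k)` prefixes of length `n`. The
corresponding cylinders have diameter at most `2⁻ⁿ`, so counting them bounds the Hausdorff dimension
from above; the product of the uniform measures on the `F k` gives each of them mass at most the
inverse of their number, so the mass distribution principle bounds it from below. In particular the
sequences supported on a set of density `α` have dimension `α`.

With `O` the odd numbers and `N = range e`, every sequence supported on `(O ∪ M) \ N` lies in `W_δ`,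
because its restriction to `N` is zero, and every sequence in `W_δ` is supported on `O ∪ M ∪ N`.
Since `N` has density zero, both supports have density `1 / 2 + (δ - 1 / 2) = δ`. -/

open PiNat ProbabilityTheory Topology
open scoped ENNReal NNReal

theorem inv_two_pow_rpow (n : ℕ) (d : ℝ) :
    ((2⁻¹ : ℝ≥0∞) ^ n) ^ d = ((2 : ℝ≥0∞) ^ (d * n))⁻¹ := by
  rw [← ENNReal.rpow_natCast, ← ENNReal.rpow_mul, mul_comm, ENNReal.inv_rpow]

theorem inv_two_pow_le_inv_two_pow_iff {m n : ℕ} :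
    (2⁻¹ : ℝ≥0∞) ^ m ≤ 2⁻¹ ^ n ↔ n ≤ m := by
  rw [← ENNReal.inv_pow, ← ENNReal.inv_pow, ENNReal.inv_le_inv]
  exact_mod_cast pow_le_pow_iff_right₀ (one_lt_two (α := ℕ))

section PiNatSpace

attribute [local instance] PiNat.metricSpace

variable {E : ℕ → Type*} [∀ n, TopologicalSpace (E n)] [∀ n, DiscreteTopology (E n)]
  {s : Set (∀ n, E n)} {d : ℝ≥0}

theorem edist_eq_inv_two_pow_firstDiff {x y : ∀ n, E n} (h : x ≠ y) :
    edist x y = 2⁻¹ ^ firstDiff x y := by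
  rw [edist_dist, PiNat.dist_eq_of_ne h, ENNReal.ofReal_pow (by norm_num), one_div,
    ENNReal.ofReal_inv_of_pos two_pos, ENNReal.ofReal_ofNat]

theorem mem_cylinder_iff_edist_le {x y : ∀ n, E n} {n : ℕ} :
    y ∈ cylinder x n ↔ edist y x ≤ 2⁻¹ ^ n := by
  rcases eq_or_ne y x with rfl | hne
  · simp
  · rw [edist_eq_inv_two_pow_firstDiff hne, mem_cylinder_iff_le_firstDiff hne,
      inv_two_pow_le_inv_two_pow_iff]

theorem ediam_le_inv_two_pow_iff {n : ℕ} :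
    ediam s ≤ 2⁻¹ ^ n ↔ ∀ x ∈ s, s ⊆ cylinder x n := by
  simp only [ediam_le_iff, ← mem_cylinder_iff_edist_le]
  exact ⟨fun h x hx y hy => h y hy x hx, fun h y hy x hx => h x hx hy⟩

theorem exists_ediam_eq_inv_two_pow (hs : s.Nontrivial) : ∃ n : ℕ, ediam s = 2⁻¹ ^ n := by
  classical
  have hdiff : ∃ n, ∃ x ∈ s, ∃ y ∈ s, x ≠ y ∧ firstDiff x y = n := by
    obtain ⟨x, hx, y, hy, hxy⟩ := hs
    exact ⟨_, x, hx, y, hy, hxy, rfl⟩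
  refine ⟨Nat.find hdiff, le_antisymm (ediam_le fun x hx y hy => ?_) ?_⟩
  · rcases eq_or_ne x y with rfl | hxy
    · simp
    · rw [edist_eq_inv_two_pow_firstDiff hxy]
      exact inv_two_pow_le_inv_two_pow_iff.2 (Nat.find_min' hdiff ⟨x, hx, y, hy, hxy, rfl⟩)
  · obtain ⟨x, hx, y, hy, hxy, hn⟩ := Nat.find_spec hdiff
    rw [← hn, ← edist_eq_inv_two_pow_firstDiff hxy]
    exact edist_le_ediam_of_mem hx hy

theorem dimH_le_of_frequently_card_prefixes_le
    (h : ∃ᶠ n in atTop, ∃ C : Finset (∀ k : Finset.range n, E k),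
      MapsTo (Finset.range n).restrict s C ∧ (C.card : ℝ≥0∞) ≤ 2 ^ (d * n : ℝ)) :
    dimH s ≤ d := by
  obtain ⟨φ, hφ, hC⟩ := extraction_of_frequently_atTop h
  choose C hmaps hcard using hC
  let t (n : ℕ) (p : C n) : Set (∀ k, E k) := {x | (Finset.range (φ n)).restrict x = p}
  have hdiam (n : ℕ) (p : C n) : ediam (t n p) ≤ 2⁻¹ ^ φ n :=
    ediam_le_inv_two_pow_iff.2 fun x hx y hy k hk =>
      congrFun (Eq.trans hy (Eq.symm hx)) ⟨k, Finset.mem_range.2 hk⟩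
  have hcover (n : ℕ) : s ⊆ ⋃ p, t n p := fun x hx => mem_iUnion.2 ⟨⟨_, hmaps n hx⟩, rfl⟩
  have hscale : Tendsto (fun n => (2⁻¹ : ℝ≥0∞) ^ φ n) atTop (𝓝 0) :=
    (ENNReal.tendsto_pow_atTop_nhds_zero_of_lt_one (by simp)).comp hφ.tendsto_atTop
  have hsum (n : ℕ) : ∑ p, ediam (t n p) ^ (d : ℝ) ≤ 1 := by
    calc ∑ p, ediam (t n p) ^ (d : ℝ)
        ≤ ∑ _p : C n, ((2 : ℝ≥0∞) ^ (d * φ n : ℝ))⁻¹ := by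
          gcongr with p
          rw [← inv_two_pow_rpow]
          exact ENNReal.rpow_le_rpow (hdiam n p) d.2
      _ = (C n).card / 2 ^ (d * φ n : ℝ) := by simp [div_eq_mul_inv]
      _ ≤ 1 := ENNReal.div_le_of_le_mul (by simpa using hcard n)
  borelize (∀ k, E k)
  refine dimH_le_of_hausdorffMeasure_ne_top (ne_top_of_le_ne_top ENNReal.one_ne_top ?_)
  calc μH[d] s ≤ liminf (fun n => ∑ p, ediam (t n p) ^ (d : ℝ)) atTop :=
        Measure.hausdorffMeasure_le_liminf_sum d s _ hscale t (.of_forall hdiam)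
          (.of_forall hcover)
    _ ≤ 1 := liminf_le_of_frequently_le' (Frequently.of_forall hsum)

theorem measure_le_ediam_rpow [MeasurableSpace (∀ n, E n)] {μ : Measure (∀ n, E n)} {m : ℕ}
    (hμ : ∀ n ≥ m, ∀ x, μ (cylinder x n) ≤ (2 ^ (d * n : ℝ))⁻¹)
    (hs : ediam s ≤ 2⁻¹ ^ m) : μ s ≤ ediam s ^ (d : ℝ) := by
  have hcyl {n : ℕ} (hn : m ≤ n) {x : ∀ n, E n} (hx : s ⊆ cylinder x n) :
      μ s ≤ (2⁻¹ ^ n) ^ (d : ℝ) := by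
    rw [inv_two_pow_rpow]
    exact (measure_mono hx).trans (hμ n hn x)
  rcases s.subsingleton_or_nontrivial with hsub | hnt
  · rcases hsub.eq_empty_or_singleton with rfl | ⟨x, rfl⟩
    · simp
    · have hlim : Tendsto (fun n : ℕ => ((2⁻¹ : ℝ≥0∞) ^ n) ^ (d : ℝ)) atTop
          (𝓝 (ediam {x} ^ (d : ℝ))) := by
        rw [ediam_singleton]
        exact (ENNReal.tendsto_pow_atTop_nhds_zero_of_lt_one (by simp)).ennrpow_const _
      refine ge_of_tendsto hlim ?_
      filter_upwards [eventually_ge_atTop m] with n hn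
      exact hcyl hn (singleton_subset_iff.2 (self_mem_cylinder x n))
  · obtain ⟨n, hn⟩ := exists_ediam_eq_inv_two_pow hnt
    obtain ⟨x, hx⟩ := hnt.nonempty
    rw [hn] at hs ⊢
    exact hcyl (inv_two_pow_le_inv_two_pow_iff.1 hs) (ediam_le_inv_two_pow_iff.1 hn.le x hx)

/-- The mass distribution principle. -/
theorem le_dimH_of_eventually_measure_cylinder_le [MeasurableSpace (∀ n, E n)]
    [BorelSpace (∀ n, E n)] {μ : Measure (∀ n, E n)} (hs : μ s ≠ 0)
    (hμ : ∀ᶠ n : ℕ in atTop, ∀ x, μ (cylinder x n) ≤ (2 ^ (d * n : ℝ))⁻¹) : d ≤ dimH s := by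
  obtain ⟨m, hm⟩ := eventually_atTop.1 hμ
  have hle : μ ≤ μH[d] := Measure.le_hausdorffMeasure d μ (2⁻¹ ^ m)
    (ENNReal.pow_pos (by simp) m) fun t ht => measure_le_ediam_rpow hm ht
  exact le_dimH_of_hausdorffMeasure_ne_zero (ne_bot_of_le_ne_bot hs (hle s))

end PiNatSpace

theorem uniformOn_singleton_le {α : Type*} [MeasurableSpace α] [MeasurableSingletonClass α]
    (F : Finset α) (a : α) : uniformOn (F : Set α) {a} ≤ (F.card : ℝ≥0∞)⁻¹ := by
  classical
  rw [← Finset.coe_singleton, uniformOn_apply_finset, ← one_div]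
  gcongr
  exact_mod_cast Finset.card_le_card Finset.inter_subset_right

theorem infinitePi_uniformOn_cylinder_le {E : ℕ → Type*} [∀ n, MeasurableSpace (E n)]
    [∀ n, MeasurableSingletonClass (E n)] (F : ∀ n, Finset (E n))
    [∀ n, IsProbabilityMeasure (uniformOn (F n : Set (E n)))] (x : ∀ n, E n) (n : ℕ) :
    Measure.infinitePi (fun k => uniformOn (F k : Set (E k))) (cylinder x n) ≤
      (∏ k ∈ Finset.range n, ((F k).card : ℝ≥0∞))⁻¹ := by
  rw [cylinder_eq_pi, Measure.infinitePi_pi _ fun k _ => measurableSet_singleton _,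
    ENNReal.prod_inv_distrib (by simp [Set.Pairwise])]
  exact Finset.prod_le_prod' fun k _ => uniformOn_singleton_le (F k) (x k)

section ProductSet

attribute [local instance] PiNat.metricSpace

variable {E : ℕ → Type*} [∀ n, TopologicalSpace (E n)] [∀ n, DiscreteTopology (E n)]
  {F : ∀ n, Finset (E n)} {d : ℝ≥0}

theorem dimH_pi_le
    (h : ∃ᶠ n : ℕ in atTop, ∏ k ∈ Finset.range n, ((F k).card : ℝ≥0∞) ≤ 2 ^ (d * n : ℝ)) :
    dimH (univ.pi fun k => (F k : Set (E k))) ≤ d := by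
  refine dimH_le_of_frequently_card_prefixes_le (h.mono fun n hn => ?_)
  refine ⟨Fintype.piFinset fun k => F k, fun x hx => ?_, ?_⟩
  · exact Fintype.mem_piFinset.2 fun k => hx k (mem_univ _)
  · rw [Fintype.card_piFinset, Finset.prod_coe_sort _ fun k => (F k).card]
    exact_mod_cast hn

theorem le_dimH_pi [∀ n, Countable (E n)]
    (h : ∀ᶠ n : ℕ in atTop, 2 ^ (d * n : ℝ) ≤ ∏ k ∈ Finset.range n, ((F k).card : ℝ≥0∞)) :
    d ≤ dimH (univ.pi fun k => (F k : Set (E k))) := by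
  have hF (k : ℕ) : (F k).Nonempty := by
    obtain ⟨n, hn, hkn⟩ := (h.and (eventually_gt_atTop k)).exists
    have hprod := ((ENNReal.rpow_pos two_pos ENNReal.ofNat_ne_top).trans_le hn).ne'
    simpa [Finset.nonempty_iff_ne_empty] using
      Finset.prod_ne_zero_iff.1 hprod k (Finset.mem_range.2 hkn)
  let (n : ℕ) : MeasurableSpace (E n) := borel (E n)
  have (n : ℕ) : BorelSpace (E n) := ⟨rfl⟩
  have (n : ℕ) : IsProbabilityMeasure (uniformOn (F n : Set (E n))) :=
    isProbabilityMeasure_uniformOn (F n).finite_toSet (hF n)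
  have : BorelSpace (∀ n, E n) := Pi.borelSpace
  let μ := Measure.infinitePi fun k => uniformOn (F k : Set (E k))
  have hμ : μ (univ.pi fun k => (F k : Set (E k))) = 1 := by
    rw [Measure.infinitePi_pi_univ _ fun k => (F k).measurableSet]
    simp [uniformOn_self, hF]
  refine le_dimH_of_eventually_measure_cylinder_le (μ := μ) (by simp [hμ]) ?_
  filter_upwards [h] with n hn x
  exact (infinitePi_uniformOn_cylinder_le F x n).trans (ENNReal.inv_le_inv.2 hn)

end ProductSet

/-- `HasDensity A α` says that the set `A` of natural numbers has asymptotic density `α`. -/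
def HasDensity (A : Set ℕ) (α : ℝ) : Prop :=
  Tendsto (fun n : ℕ => ((A ∩ Iic n).ncard : ℝ) / (n + 1)) atTop (𝓝 α)

theorem hasDensity_iff_tendsto_Iio {A : Set ℕ} {α : ℝ} :
    HasDensity A α ↔ Tendsto (fun n : ℕ => ((A ∩ Iio n).ncard : ℝ) / n) atTop (𝓝 α) := by
  rw [← tendsto_add_atTop_iff_nat 1, HasDensity]
  simp only [Nat.cast_add_one, Iio_add_one_eq_Iic]

theorem ncard_inter_Iio_eq_card_filter (A : Set ℕ) [DecidablePred (· ∈ A)] (n : ℕ) :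
    (A ∩ Iio n).ncard = ((Finset.range n).filter (· ∈ A)).card := by
  rw [← ncard_coe_finset, Finset.coe_filter]
  congr 1
  grind

theorem ncard_odd_inter_Iio (n : ℕ) : ({k | Odd k} ∩ Iio n).ncard = n / 2 := by
  classical
  rw [ncard_inter_Iio_eq_card_filter, ← Nat.card_multiples n 2]
  congr 1
  grind

theorem hasDensity_odd : HasDensity {k | Odd k} (1 / 2) := by
  rw [hasDensity_iff_tendsto_Iio]
  refine ((tendsto_nat_floor_mul_div_atTop (by norm_num)).comp
    tendsto_natCast_atTop_atTop).congr fun n => ?_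
  have hfloor : ⌊(1 / 2 : ℝ) * n⌋₊ = n / 2 := by
    rw [one_div_mul_eq_div]
    exact_mod_cast Nat.floor_div_eq_div n 2
  rw [Function.comp_apply, hfloor, ncard_odd_inter_Iio]

theorem ncard_inter_Iic_le_add {A B N : Set ℕ} (h : A ⊆ B ∪ N) (n : ℕ) :
    (A ∩ Iic n).ncard ≤ (B ∩ Iic n).ncard + (N ∩ Iic n).ncard := by
  have hsub : A ∩ Iic n ⊆ B ∩ Iic n ∪ N ∩ Iic n := by grind
  exact (ncard_le_ncard hsub).trans (ncard_union_le _ _)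

namespace HasDensity

variable {A B : Set ℕ} {α : ℝ}

theorem nonneg (hA : HasDensity A α) : 0 ≤ α :=
  ge_of_tendsto' hA fun _ => by positivity

theorem union {β : ℝ} (hA : HasDensity A α) (hB : HasDensity B β) (h : Disjoint A B) :
    HasDensity (A ∪ B) (α + β) := by
  refine (Tendsto.add hA hB).congr fun n => ?_
  rw [union_inter_distrib_right, ncard_union_eq (h.mono inter_subset_left inter_subset_left),
    Nat.cast_add, add_div]

theorem congr_of_symmDiff_subset {N : Set ℕ} (hA : HasDensity A α) (hN : HasDensity N 0)
    (h : symmDiff A B ⊆ N) : HasDensity B α := by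
  have hAB (n : ℕ) : ((A ∩ Iic n).ncard : ℝ) ≤ (B ∩ Iic n).ncard + (N ∩ Iic n).ncard :=
    mod_cast ncard_inter_Iic_le_add (by grind) n
  have hBA (n : ℕ) : ((B ∩ Iic n).ncard : ℝ) ≤ (A ∩ Iic n).ncard + (N ∩ Iic n).ncard :=
    mod_cast ncard_inter_Iic_le_add (by grind) n
  have hlower := Tendsto.sub hA hN
  have hupper := Tendsto.add hA hN
  rw [sub_zero] at hlower
  rw [add_zero] at hupper
  refine tendsto_of_tendsto_of_tendsto_of_le_of_le hlower hupper (fun n => ?_) fun n => ?_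
  · rw [← sub_div]
    gcongr
    exact sub_le_iff_le_add.2 (hAB n)
  · rw [← add_div]
    gcongr
    exact hBA n

end HasDensity

/-- The set of binary sequences whose support is contained in `A`. -/
def supportedSeqs (A : Set ℕ) : Set (ℕ → Bool) := {x | ∀ k ∉ A, x k = false}

theorem supportedSeqs_mono {A B : Set ℕ} (h : A ⊆ B) : supportedSeqs A ⊆ supportedSeqs B :=
  fun _ hx k hk => hx k (notMem_subset h hk)

open scoped Classical in
/-- The values at `k` of the sequences supported in `A`; these finite sets present
`supportedSeqs A` as a product set. -/
noncomputable def supportedValues (A : Set ℕ) (k : ℕ) : Finset Bool :=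
  if k ∈ A then Finset.univ else {false}

theorem supportedSeqs_eq_pi (A : Set ℕ) :
    supportedSeqs A = univ.pi fun k => (supportedValues A k : Set Bool) := by
  ext x
  simp only [supportedSeqs, supportedValues, mem_ofPred_eq, mem_univ_pi]
  refine forall_congr' fun k => ?_
  split_ifs with hk <;> simp [hk]

theorem prod_card_supportedValues (A : Set ℕ) (n : ℕ) :
    ∏ k ∈ Finset.range n, ((supportedValues A k).card : ℝ≥0∞) =
      2 ^ ((A ∩ Iio n).ncard : ℝ) := by
  classical
  simp [supportedValues, apply_ite Finset.card, Finset.prod_ite, ncard_inter_Iio_eq_card_filter]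

theorem dimH_supportedSeqs {A : Set ℕ} {α : ℝ} (hA : HasDensity A α) :
    dimH (supportedSeqs A) = ENNReal.ofReal α := by
  rw [supportedSeqs_eq_pi]
  have hlim := hasDensity_iff_tendsto_Iio.1 hA
  have hpos : ∀ᶠ n : ℕ in atTop, (0 : ℝ) < n :=
    (eventually_gt_atTop 0).mono fun n hn => Nat.cast_pos.2 hn
  refine le_antisymm (le_of_forall_gt_imp_ge_of_dense fun b hb => ?_)
    (ENNReal.le_of_forall_nnreal_lt fun d hd => ?_)
  · obtain ⟨d, hαd, hdb⟩ := ENNReal.lt_iff_exists_nnreal_btwn.1 hb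
    refine (dimH_pi_le (Eventually.frequently ?_)).trans hdb.le
    filter_upwards [hlim.eventually_lt_const ((ENNReal.ofReal_lt_coe_iff hA.nonneg).1 hαd),
      hpos] with n hn hn0
    rw [prod_card_supportedValues]
    exact ENNReal.rpow_le_rpow_of_exponent_le one_le_two ((div_lt_iff₀ hn0).1 hn).le
  · refine le_dimH_pi ?_
    filter_upwards [hlim.eventually_const_lt (ENNReal.coe_lt_ofReal.1 hd), hpos] with n hn hn0
    rw [prod_card_supportedValues]
    exact ENNReal.rpow_le_rpow_of_exponent_le one_le_two ((lt_div_iff₀ hn0).1 hn).le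

theorem dimH_supportedSeqs_inter_preimage {A : Set ℕ} {α : ℝ} (hA : HasDensity A α)
    {ι : Type*} {e : ι → ℕ} (he : HasDensity (range e) 0) {W : Set (ι → Bool)}
    (hW : (fun _ => false) ∈ W) :
    dimH (supportedSeqs (A ∪ range e) ∩ (fun x i => x (e i)) ⁻¹' W) = ENNReal.ofReal α := by
  have hunion : HasDensity (A ∪ range e) α := hA.congr_of_symmDiff_subset he (by grind)
  have hdiff : HasDensity (A \ range e) α := hA.congr_of_symmDiff_subset he (by grind)
  refine le_antisymm ?_ ?_
  · exact (dimH_mono inter_subset_left).trans_eq (dimH_supportedSeqs hunion)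
  · refine (dimH_supportedSeqs hdiff).symm.trans_le (dimH_mono fun x hx => ⟨?_, ?_⟩)
    · exact supportedSeqs_mono (sdiff_subset.trans subset_union_left) hx
    · have hxe : (fun i => x (e i)) = fun _ => false :=
        funext fun i => hx _ fun h => h.2 (mem_range_self i)
      rwa [mem_preimage, hxe]

theorem dimH_Wdelta_general {δ : ℝ} {ι : Type*} {e : ι → ℕ} (he : HasDensity (range e) 0)
    {M : Set ℕ} (hMeven : ∀ k ∈ M, Even k) (hM : HasDensity M (δ - 1 / 2))
    {W : Set (ι → Bool)} (hW : (fun _ => false) ∈ W) :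
    dimH {x : ℕ → Bool | (∀ k, Even k → k ∉ M ∪ range e → x k = false) ∧
      (fun i => x (e i)) ∈ W} = ENNReal.ofReal δ := by
  have hdisj : Disjoint {k | Odd k} M :=
    disjoint_left.2 fun k hk hkM => Nat.not_even_iff_odd.2 hk (hMeven k hkM)
  have hδ : HasDensity ({k | Odd k} ∪ M) δ := by simpa using hasDensity_odd.union hM hdisj
  rw [← dimH_supportedSeqs_inter_preimage hδ he hW]
  congr 1
  ext x
  simp [supportedSeqs]

/-- With the setup of Definition `W_δ`, the set `W_δ` has Hausdorff dimension `δ`. -/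
theorem dimH_Wdelta (δ : ℝ) (hδ : δ ∈ Set.Icc (1 / 2 : ℝ) 1)
    (e : ℕ → ℕ) (he : StrictMono e)
    (heEven : ∀ ℓ : ℕ, Even (e (2 * ℓ)) ∧ e (2 * ℓ + 1) = e (2 * ℓ) + 1)
    (hN : Tendsto (fun n : ℕ => ((Set.range e ∩ Set.Iic n).ncard : ℝ) / (n + 1))
      atTop (nhds 0))
    (M : Set ℕ) (hMinf : M.Infinite) (hMeven : ∀ k ∈ M, Even k)
    (hMN : Disjoint M (Set.range e))
    (hM : Tendsto (fun n : ℕ => ((M ∩ Set.Iic n).ncard : ℝ) / (n + 1))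
      atTop (nhds (δ - 1 / 2)))
    (W : Set (ℕ → Bool)) (hW0 : (fun _ => false) ∈ W)
    (Wδ : Set (ℕ → Bool))
    (hWδ : Wδ = {x : ℕ → Bool |
      (∀ k : ℕ, Even k → k ∉ M ∪ Set.range e → x k = false) ∧ (fun k => x (e k)) ∈ W}) :
    dimH Wδ = ENNReal.ofReal δ := by
  subst hWδ
  exact dimH_Wdelta_general hN hMeven hM hW0
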